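/- arXiv:2502.20055 — 8 statements merged into one kernel-verified Lean document; each statement's English description precedes it below -/
import Mathlib

section
/- The map θ ↦ ρ_θ from ℝ into 2×2 complex matrices defined by ρ_θ = (1/2)I₂ + (1/2)exp(−1/θ²)·[[cos(2/θ), sin(2/θ)],[sin(2/θ), −cos(2/θ)]] for θ ≠ 0 and ρ_0 = (1/2)I₂ is infinitely differentiable (C^∞) on all of ℝ (equivalently, each of its four entry functions ℝ → ℂ is C^∞). -/
open Matrix

/-- The family of 2×2 density matrices: `ρ_θ = (1/2)I₂ + (1/2)exp(−1/θ²)·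
[[cos(2/θ), sin(2/θ)],[sin(2/θ), −cos(2/θ)]]` for `θ ≠ 0`, and `ρ_0 = (1/2)I₂`. -/
noncomputable def rho (θ : ℝ) : Matrix (Fin 2) (Fin 2) ℂ :=
  if θ = 0 then (1 / 2 : ℂ) • 1
  else
    (1 / 2 : ℂ) • 1 +
      ((1 / 2 : ℝ) * Real.exp (-1 / θ ^ 2) : ℝ) •
        !![(Real.cos (2 / θ) : ℂ), (Real.sin (2 / θ) : ℂ);
           (Real.sin (2 / θ) : ℂ), (-Real.cos (2 / θ) : ℂ)]

/-!
The entries of `ρ_θ` are constants plus real or imaginary parts of `±½ g(1/θ)`, where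
`g(y) = exp(-y² + 2iy)` is a Schwartz function. For any Schwartz function `f` the function
`x ↦ f(1/x)`, extended by `0` at the origin, is smooth: it is continuous at `0` because `f` vanishes
at infinity, and its derivative `-x⁻² f'(1/x)` is again of this form, for the Schwartz function
`y ↦ -y² f'(y)`.
-/

open Filter Polynomial
open scoped ContDiff SchwartzMap Topology

section SchwartzInversion

variable {F : Type*} [NormedAddCommGroup F] [NormedSpace ℝ F]

/-- The function `x ↦ f (1 / x)` for a Schwartz function `f`, extended by `0` at the origin (its
limit there) instead of by the junk value `f 0⁻¹ = f 0`. -/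
noncomputable def schwartzCompInv (f : 𝓢(ℝ, F)) : ℝ → F :=
  Function.update (fun x ↦ f x⁻¹) 0 0

@[simp]
theorem schwartzCompInv_zero (f : 𝓢(ℝ, F)) : schwartzCompInv f 0 = 0 :=
  Function.update_self ..

theorem schwartzCompInv_of_ne (f : 𝓢(ℝ, F)) {x : ℝ} (hx : x ≠ 0) :
    schwartzCompInv f x = f x⁻¹ :=
  Function.update_of_ne hx ..

theorem continuousAt_schwartzCompInv_zero (f : 𝓢(ℝ, F)) :
    ContinuousAt (schwartzCompInv f) 0 := by
  have hinv : Tendsto (fun x : ℝ ↦ x⁻¹) (𝓝[≠] 0) (cocompact ℝ) :=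
    Metric.cobounded_eq_cocompact (α := ℝ) ▸ tendsto_inv₀_nhdsNE_zero
  exact continuousAt_update_same.2 (f.tendsto_cocompact.comp hinv)

/-- The Schwartz function `y ↦ -y² f'(y)`, which represents the derivative of `x ↦ f (1 / x)` as a
function of `1 / x`. -/
noncomputable def schwartzNegSqMulDeriv (f : 𝓢(ℝ, F)) : 𝓢(ℝ, F) :=
  SchwartzMap.smulLeftCLM F (fun y : ℝ ↦ -y ^ 2) (SchwartzMap.derivCLM ℝ F f)

theorem schwartzNegSqMulDeriv_apply (f : 𝓢(ℝ, F)) (y : ℝ) :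
    schwartzNegSqMulDeriv f y = -y ^ 2 • deriv f y := by
  have hgrowth : (fun y : ℝ ↦ -y ^ 2).HasTemperateGrowth := by fun_prop
  simp [schwartzNegSqMulDeriv, SchwartzMap.smulLeftCLM_apply_apply hgrowth]

theorem hasDerivAt_schwartzCompInv_of_ne (f : 𝓢(ℝ, F)) {x : ℝ} (hx : x ≠ 0) :
    HasDerivAt (schwartzCompInv f) (schwartzCompInv (schwartzNegSqMulDeriv f) x) x := by
  have hcomp : HasDerivAt (fun x ↦ f x⁻¹) (schwartzCompInv (schwartzNegSqMulDeriv f) x) x := by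
    simpa [schwartzCompInv_of_ne _ hx, schwartzNegSqMulDeriv_apply, Function.comp_def] using
      (f.hasDerivAt x⁻¹).scomp x (hasDerivAt_inv hx)
  refine hcomp.congr_of_eventuallyEq ?_
  filter_upwards [isOpen_ne.mem_nhds hx] with y hy using schwartzCompInv_of_ne f hy

theorem hasDerivAt_schwartzCompInv (f : 𝓢(ℝ, F)) (x : ℝ) :
    HasDerivAt (schwartzCompInv f) (schwartzCompInv (schwartzNegSqMulDeriv f) x) x :=
  hasDerivAt_of_hasDerivAt_of_ne' (fun _ ↦ hasDerivAt_schwartzCompInv_of_ne f)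
    (continuousAt_schwartzCompInv_zero f)
    (continuousAt_schwartzCompInv_zero (schwartzNegSqMulDeriv f)) x

theorem deriv_schwartzCompInv (f : 𝓢(ℝ, F)) :
    deriv (schwartzCompInv f) = schwartzCompInv (schwartzNegSqMulDeriv f) :=
  funext fun x ↦ (hasDerivAt_schwartzCompInv f x).deriv

theorem contDiff_schwartzCompInv (f : 𝓢(ℝ, F)) : ContDiff ℝ ∞ (schwartzCompInv f) := by
  have hdiff (f : 𝓢(ℝ, F)) : Differentiable ℝ (schwartzCompInv f) := fun x ↦
    (hasDerivAt_schwartzCompInv f x).differentiableAt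
  refine contDiff_infty.2 fun n ↦ ?_
  induction n generalizing f with
  | zero => exact contDiff_zero.2 (hdiff f).continuous
  | succ n ih =>
    refine (contDiff_succ_iff_deriv (n := n)).2 ⟨hdiff f, by simp, ?_⟩
    rw [deriv_schwartzCompInv]
    exact ih (schwartzNegSqMulDeriv f)

end SchwartzInversion

section Gaussian

theorem exists_iteratedDeriv_eq_polynomial_mul {f : ℝ → ℂ} {q : ℂ[X]}
    (hf : ∀ x : ℝ, HasDerivAt f (q.eval (x : ℂ) * f x) x) (n : ℕ) :
    ∃ p : ℂ[X], ∀ x : ℝ, iteratedDeriv n f x = p.eval (x : ℂ) * f x := by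
  induction n with
  | zero => exact ⟨1, by simp⟩
  | succ n ih =>
    obtain ⟨p, hp⟩ := ih
    refine ⟨derivative p + p * q, fun x ↦ ?_⟩
    have hderiv := (p.hasDerivAt (x : ℂ)).comp_ofReal.fun_mul (hf x)
    rw [iteratedDeriv_succ, funext hp, hderiv.deriv]
    simp only [eval_add, eval_mul]
    ring

variable {a : ℂ}

theorem tendsto_pow_mul_cexp_quadratic_cocompact (ha : a.re < 0) (b : ℂ) (n : ℕ) :
    Tendsto (fun x : ℝ ↦ (x : ℂ) ^ n * Complex.exp (a * x ^ 2 + b * x)) (cocompact ℝ) (𝓝 0) := by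
  have hdecay : (fun x : ℝ ↦ (x : ℂ) ^ n * Complex.exp (a * x ^ 2 + b * x))
      =o[cocompact ℝ] fun x : ℝ ↦ |x| ^ n * |x| ^ (-n : ℝ) :=
    (Asymptotics.IsBigO.of_norm_eventuallyLE (.of_forall fun x ↦ by simp)).mul_isLittleO
      (cexp_neg_quadratic_isLittleO_abs_rpow_cocompact ha b (-n))
  refine (Asymptotics.isLittleO_one_iff ℝ).1 (hdecay.congr' .rfl ?_)
  filter_upwards [isCompact_singleton (x := (0 : ℝ)).compl_mem_cocompact] with x hx
  have habs : |x| ≠ 0 := abs_ne_zero.2 hx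
  simp [Real.rpow_neg, habs]

theorem tendsto_polynomial_mul_cexp_quadratic_cocompact (ha : a.re < 0) (b : ℂ) (p : ℂ[X]) :
    Tendsto (fun x : ℝ ↦ p.eval (x : ℂ) * Complex.exp (a * x ^ 2 + b * x))
      (cocompact ℝ) (𝓝 0) := by
  induction p using Polynomial.induction_on' with
  | add p q hp hq => simpa [add_mul] using hp.add hq
  | monomial n c =>
    simpa [mul_assoc] using (tendsto_pow_mul_cexp_quadratic_cocompact ha b n).const_mul c

theorem exists_norm_polynomial_mul_cexp_quadratic_le (ha : a.re < 0) (b : ℂ) (p : ℂ[X]) :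
    ∃ M, ∀ x : ℝ, ‖p.eval (x : ℂ) * Complex.exp (a * x ^ 2 + b * x)‖ ≤ M := by
  have hcont : Continuous fun x : ℝ ↦ p.eval (x : ℂ) * Complex.exp (a * x ^ 2 + b * x) := by
    fun_prop
  have hcompact := (tendsto_polynomial_mul_cexp_quadratic_cocompact ha b p)
    |>.isCompact_insert_range_of_cocompact hcont
  obtain ⟨M, hM⟩ := hcompact.isBounded.exists_norm_le
  exact ⟨M, fun x ↦ hM _ (.inr ⟨x, rfl⟩)⟩

theorem hasDerivAt_cexp_quadratic (a b : ℂ) (x : ℝ) :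
    HasDerivAt (fun x : ℝ ↦ Complex.exp (a * x ^ 2 + b * x))
      ((C (2 * a) * X + C b).eval (x : ℂ) * Complex.exp (a * x ^ 2 + b * x)) x := by
  have hexp := ((C a * X ^ 2 + C b * X).hasDerivAt (x : ℂ)).cexp.comp_ofReal
  simp only [eval_add, eval_mul, eval_C, eval_pow, eval_X] at hexp
  refine hexp.congr_deriv ?_
  simp only [derivative_add, derivative_C_mul, derivative_X_pow_succ, derivative_X, eval_add,
    eval_mul, eval_C, eval_pow, eval_X, eval_one, Nat.cast_one]
  ring

/-- The Gaussian `x ↦ exp (a x² + b x)` with complex coefficients, `re a < 0`, as a Schwartz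
function. -/
noncomputable def gaussianSchwartz (ha : a.re < 0) (b : ℂ) : 𝓢(ℝ, ℂ) where
  toFun x := Complex.exp (a * x ^ 2 + b * x)
  smooth' := ((contDiff_const.mul (Complex.ofRealCLM.contDiff.pow 2)).add
    (contDiff_const.mul Complex.ofRealCLM.contDiff)).cexp
  decay' k n := by
    obtain ⟨p, hp⟩ := exists_iteratedDeriv_eq_polynomial_mul (hasDerivAt_cexp_quadratic a b) n
    obtain ⟨M, hM⟩ := exists_norm_polynomial_mul_cexp_quadratic_le ha b (X ^ k * p)
    refine ⟨M, fun x ↦ ?_⟩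
    simpa [norm_iteratedFDeriv_eq_norm_iteratedDeriv, hp, mul_assoc] using hM x

theorem gaussianSchwartz_apply (ha : a.re < 0) (b : ℂ) (x : ℝ) :
    gaussianSchwartz ha b x = Complex.exp (a * x ^ 2 + b * x) :=
  rfl

end Gaussian

/-- The Schwartz function `y ↦ exp (-y² + 2iy)`, whose value at `1 / θ` is
`exp (-1 / θ²) (cos (2 / θ) + i sin (2 / θ))`. -/
noncomputable def modulatedGaussian : 𝓢(ℝ, ℂ) :=
  gaussianSchwartz (a := -1) (by simp) (2 * Complex.I)

theorem modulatedGaussian_re (y : ℝ) :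
    (modulatedGaussian y).re = Real.exp (-y ^ 2) * Real.cos (2 * y) := by
  simp [modulatedGaussian, gaussianSchwartz_apply, Complex.exp_re, ← Complex.ofReal_pow]

theorem modulatedGaussian_im (y : ℝ) :
    (modulatedGaussian y).im = Real.exp (-y ^ 2) * Real.sin (2 * y) := by
  simp [modulatedGaussian, gaussianSchwartz_apply, Complex.exp_im, ← Complex.ofReal_pow]

/-- The real matrix of `w ↦ z * conj w` on `ℂ = ℝ²`, with its entries regarded as complex
numbers. For `z = r * exp (iφ)` it is `r • [[cos φ, sin φ], [sin φ, -cos φ]]`. -/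
noncomputable def reflectionMatrix (z : ℂ) : Matrix (Fin 2) (Fin 2) ℂ :=
  !![(z.re : ℂ), (z.im : ℂ); (z.im : ℂ), (-z.re : ℂ)]

theorem contDiff_reflectionMatrix_apply {n : WithTop ℕ∞} (i j : Fin 2) :
    ContDiff ℝ n fun z ↦ reflectionMatrix z i j := by
  have hre : ContDiff ℝ n fun z : ℂ ↦ (z.re : ℂ) :=
    (Complex.ofRealCLM.comp Complex.reCLM).contDiff
  have him : ContDiff ℝ n fun z : ℂ ↦ (z.im : ℂ) :=
    (Complex.ofRealCLM.comp Complex.imCLM).contDiff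
  fin_cases i <;> fin_cases j
  exacts [hre, him, him, hre.neg]

theorem rho_eq (θ : ℝ) :
    rho θ = (1 / 2 : ℂ) • 1 +
      (1 / 2 : ℂ) • reflectionMatrix (schwartzCompInv modulatedGaussian θ) := by
  ext i j
  rcases eq_or_ne θ 0 with rfl | hθ
  · fin_cases i <;> fin_cases j <;> simp [rho, reflectionMatrix]
  · fin_cases i <;> fin_cases j <;>
      simp [rho, reflectionMatrix, hθ, schwartzCompInv_of_ne, modulatedGaussian_re,
        modulatedGaussian_im, div_eq_mul_inv, mul_assoc]

/-- The map `θ ↦ ρ_θ` is infinitely differentiable on all of `ℝ`, in the sense that each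
of its four entry functions `ℝ → ℂ` is `C^∞`. -/
theorem rho_contDiff : ∀ i j : Fin 2, ContDiff ℝ (⊤ : ℕ∞) (fun θ : ℝ => rho θ i j) := by
  intro i j
  have hentry : ContDiff ℝ ∞ fun θ ↦
      reflectionMatrix (schwartzCompInv modulatedGaussian θ) i j :=
    (contDiff_reflectionMatrix_apply i j).comp (contDiff_schwartzCompInv modulatedGaussian)
  simp only [rho_eq, Matrix.add_apply, Matrix.smul_apply]
  exact contDiff_const.add (hentry.const_smul (1 / 2 : ℂ))
end

section
/- Let P₁(θ) = [[cos²(1/θ), cos(1/θ)sin(1/θ)],[cos(1/θ)sin(1/θ), sin²(1/θ)]] for θ ≠ 0. Then P₁(θ) has no limit as θ → 0: there exists no 2×2 complex matrix Q such that P₁(θ) converges (entrywise) to Q as θ → 0 through nonzero values. Consequently the eigenprojection family of the smooth state family ρ_θ = λ₁(θ)P₁(θ) + λ₂(θ)(I₂ − P₁(θ)) admits no continuous extension to θ = 0. -/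
open Matrix Filter

/-- The eigenprojection family
`P₁(θ) = [[cos²(1/θ), cos(1/θ)sin(1/θ)],[cos(1/θ)sin(1/θ), sin²(1/θ)]]` (for `θ ≠ 0`). -/
noncomputable def P1 (θ : ℝ) : Matrix (Fin 2) (Fin 2) ℂ :=
  !![(Real.cos (1 / θ) ^ 2 : ℂ), (Real.cos (1 / θ) * Real.sin (1 / θ) : ℂ);
     (Real.cos (1 / θ) * Real.sin (1 / θ) : ℂ), (Real.sin (1 / θ) ^ 2 : ℂ)]

open scoped Topology

theorem eq_of_periodic_of_tendsto_atTop {α β : Type*} [AddCommGroup α] [LinearOrder α]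
    [IsOrderedAddMonoid α] [Archimedean α] [TopologicalSpace β] [T1Space β]
    {f : α → β} {c : α} {b : β} (hf : Function.Periodic f c) (hc : 0 < c)
    (hb : Tendsto f atTop (𝓝 b)) (x : α) : f x = b := by
  have translates : Tendsto (fun n : ℕ => x + n • c) atTop atTop :=
    tendsto_atTop_add_const_left _ x (tendsto_id.atTop_nsmul_const hc)
  have const : ∀ n : ℕ, f (x + n • c) = f x := fun n => hf.nsmul n x
  have lim : Tendsto (fun _ : ℕ => f x) atTop (𝓝 b) := (hb.comp translates).congr const
  exact tendsto_const_nhds_iff.mp lim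

theorem periodic_P1_inv : Function.Periodic (fun t : ℝ => P1 t⁻¹) Real.pi := by
  intro t
  simp [P1]

theorem P1_inv_pi_div_two : P1 (Real.pi / 2)⁻¹ = !![0, 0; 0, 1] := by
  simp [P1, -Complex.ofReal_cos, -Complex.ofReal_sin]

theorem P1_inv_pi_div_four : P1 (Real.pi / 4)⁻¹ = !![1 / 2, 1 / 2; 1 / 2, 1 / 2] := by
  have sqrt_two_div_two_sq : ((√2 / 2 : ℝ) : ℂ) ^ 2 = 1 / 2 := by
    rw [← Complex.ofReal_pow, div_pow, Real.sq_sqrt zero_le_two]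
    norm_num
  simp only [P1, one_div, inv_inv, Real.cos_pi_div_four, Real.sin_pi_div_four, ← sq,
    sqrt_two_div_two_sq]

theorem P1_no_limit_general (i j : Fin 2) (q : ℂ) :
    ¬ Tendsto (fun θ : ℝ => P1 θ i j) (𝓝[>] 0) (𝓝 q) := by
  intro hq
  have periodic : Function.Periodic (fun t : ℝ => P1 t⁻¹ i j) Real.pi :=
    periodic_P1_inv.comp fun M => M i j
  have eq_q : ∀ t : ℝ, P1 t⁻¹ i j = q :=
    eq_of_periodic_of_tendsto_atTop periodic Real.pi_pos
      (hq.comp tendsto_inv_atTop_nhdsGT_zero)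
  have values_eq : P1 (Real.pi / 2)⁻¹ i j = P1 (Real.pi / 4)⁻¹ i j :=
    (eq_q _).trans (eq_q _).symm
  rw [P1_inv_pi_div_two, P1_inv_pi_div_four] at values_eq
  fin_cases i <;> fin_cases j <;> norm_num at values_eq

/-- `P₁(θ)` has no limit as `θ → 0` through nonzero values: there is no 2×2 complex matrix `Q`
to which `P₁(θ)` converges entrywise as `θ → 0`, `θ ≠ 0`.  Hence the eigenprojection family of
the smooth state family `ρ_θ = λ₁(θ)P₁(θ) + λ₂(θ)(I₂ − P₁(θ))` admits no continuous extension
to `θ = 0`. -/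
theorem P1_no_limit :
    ¬ ∃ Q : Matrix (Fin 2) (Fin 2) ℂ,
      ∀ i j : Fin 2,
        Tendsto (fun θ : ℝ => P1 θ i j) (nhdsWithin 0 {0}ᶜ) (nhds (Q i j)) := by
  rintro ⟨Q, hQ⟩
  exact P1_no_limit_general 0 0 (Q 0 0) ((hQ 0 0).mono_left (nhdsGT_le_nhdsNE 0))
end

section
/- Let P₁, …, P_N : ℝ → M_n(ℂ) be differentiable families of Hermitian matrices satisfying P_j(θ)P_k(θ) = δ_{jk}P_j(θ) for all θ and all j, k. Then for all j, k and all θ: P_j'(θ)P_k'(θ)P_j(θ) = P_j(θ)P_k'(θ)P_j'(θ) (equivalently, (P_j'P_k')P_j = P_j(P_j'P_k')^*); in particular (taking k = j) the matrix (P_j'(θ))² commutes with P_j(θ). -/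
open Matrix

/-! Differentiating `pⱼ pₖ = δⱼₖ pⱼ` gives `pⱼ' pₖ + pⱼ pₖ' = δⱼₖ pⱼ'`, and the same with `j` and
`k` exchanged. Substituting these two relations, `pⱼ' (pₖ' pⱼ)` and `(pⱼ pₖ') pⱼ'` both become
`δⱼₖ (pⱼ')² - pⱼ' pₖ pⱼ'`. -/

open Topology

theorem mul_mul_eq_mul_mul_of_leibniz {R : Type*} [NonUnitalRing R] {p q p' q' c : R}
    (hpq : p' * q + p * q' = c) (hqp : q' * p + q * p' = c) (hc : Commute p' c) :
    p' * q' * p = p * (q' * p') :=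
  calc p' * q' * p
    _ = p' * (c - q * p') := by rw [mul_assoc, eq_sub_of_add_eq hqp]
    _ = (c - p' * q) * p' := by rw [mul_sub, sub_mul, hc.eq, mul_assoc]
    _ = p * (q' * p') := by rw [← eq_sub_of_add_eq' hpq, mul_assoc]

theorem hasDerivAt_matrix {𝕜 E m n : Type*} [NontriviallyNormedField 𝕜]
    [NormedAddCommGroup E] [NormedSpace 𝕜 E] [Finite m] [Finite n]
    {M : 𝕜 → Matrix m n E} {M' : Matrix m n E} {x : 𝕜} :
    HasDerivAt M M' x ↔ ∀ i j, HasDerivAt (fun t => M t i j) (M' i j) x := by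
  have := Fintype.ofFinite m
  have := Fintype.ofFinite n
  exact hasDerivAt_pi.trans (forall_congr' fun _ => hasDerivAt_pi)

section OrthogonalIdempotents

variable {𝕜 A ι : Type*} [NontriviallyNormedField 𝕜] [NormedRing A] [NormedAlgebra 𝕜 A]
  {p : ι → 𝕜 → A} {p' : ι → A} {x : 𝕜}

theorem deriv_mul_add_mul_deriv_of_orthogonalIdempotents [DecidableEq ι]
    (hp : ∀ i, HasDerivAt (p i) (p' i) x)
    (horth : ∀ᶠ t in 𝓝 x, OrthogonalIdempotents fun i => p i t) (j k : ι) :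
    p' j * p k x + p j x * p' k = if j = k then p' j else 0 := by
  have hprod : p j * p k =ᶠ[𝓝 x] if j = k then p j else 0 := by
    filter_upwards [horth] with t ht
    simpa only [Pi.mul_apply, ite_apply, Pi.zero_apply] using ht.mul_eq j k
  have hderiv : HasDerivAt (if j = k then p j else 0) (if j = k then p' j else 0) x := by
    split_ifs
    exacts [hp j, hasDerivAt_zero x]
  exact ((hp j).mul (hp k)).unique (hderiv.congr_of_eventuallyEq hprod)

theorem projection_derivative_product_identity_general
    (hp : ∀ i, HasDerivAt (p i) (p' i) x)
    (horth : ∀ᶠ t in 𝓝 x, OrthogonalIdempotents fun i => p i t) (j k : ι) :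
    p' j * p' k * p j x = p j x * (p' k * p' j) ∧ Commute (p' j * p' j) (p j x) := by
  classical
  have leibniz := deriv_mul_add_mul_deriv_of_orthogonalIdempotents hp horth
  have identity (k : ι) : p' j * p' k * p j x = p j x * (p' k * p' j) := by
    obtain rfl | hjk := eq_or_ne j k
    · exact mul_mul_eq_mul_mul_of_leibniz (leibniz j j) (leibniz j j) (by simp)
    · exact mul_mul_eq_mul_mul_of_leibniz ((leibniz j k).trans (if_neg hjk))
        ((leibniz k j).trans (if_neg hjk.symm)) (Commute.zero_right _)
  exact ⟨identity k, identity j⟩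

end OrthogonalIdempotents

/-- Let `P₁, …, P_N : ℝ → Mₙ(ℂ)` be (entrywise) differentiable families of Hermitian matrices
with `P_j(θ)P_k(θ) = δ_{jk}P_j(θ)`.  Then for all `j, k` and `θ`,
`P_j'(θ)P_k'(θ)P_j(θ) = P_j(θ)P_k'(θ)P_j'(θ)`; in particular (taking `k = j`)
the matrix `(P_j'(θ))²` commutes with `P_j(θ)`. -/
theorem projection_derivative_product_identity {n N : ℕ}
    (P P' : Fin N → ℝ → Matrix (Fin n) (Fin n) ℂ)
    (hderiv : ∀ j i₁ i₂ θ, HasDerivAt (fun t => P j t i₁ i₂) (P' j θ i₁ i₂) θ)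
    (hherm : ∀ j θ, (P j θ).IsHermitian)
    (horth : ∀ j k θ, P j θ * P k θ = if j = k then P j θ else 0) :
    ∀ (j k : Fin N) (θ : ℝ),
      P' j θ * P' k θ * P j θ = P j θ * (P' k θ * P' j θ) ∧
      Commute (P' j θ * P' j θ) (P j θ) := by
  intro j k θ
  open scoped Matrix.Norms.Operator in
  exact projection_derivative_product_identity_general (p' := (P' · θ))
    (fun i => hasDerivAt_matrix.2 (hderiv i · · θ))
    (.of_forall fun t => OrthogonalIdempotents.iff_mul_eq.2 (horth · · t)) j k
end

section
/- Let ρ_θ = Σ_{k=1}^N λ_k(θ)P_k(θ) where λ_k : ℝ → (0,∞) are differentiable with λ_j(θ) ≠ λ_k(θ) for j ≠ k, and P₁, …, P_N : ℝ → M_n(ℂ) are differentiable families of Hermitian matrices with P_j(θ)P_k(θ) = δ_{jk}P_j(θ) and Σ_{k=1}^N P_k(θ) = I for all θ. Then ρ_θ commutes with its derivative ρ_θ' for every θ if and only if Σ_{k=1}^N λ_k(θ)P_k'(θ) = 0 for every θ (in which case ρ_θ' = Σ_k λ_k'(θ)P_k(θ)). -/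
open Matrix

/-!
Write `ρ = ∑ k, λ k • P k` and `a = ∑ k, λ k • P' k`. The diagonal part `∑ k, λ' k • P k` of `ρ'`
commutes with `ρ`, so `ρ` commutes with `ρ'` iff it commutes with `a`, and we look at the Peirce
corners `P i * a * P j`. The diagonal ones always vanish: the Leibniz rule applied to
`P j * P k = δ_jk P j` gives `P i * P' k * P i = 0`. If `a` commutes with `ρ`, then
`λ i • (P i * a * P j) = λ j • (P i * a * P j)`, so the off-diagonal ones vanish too, because the
eigenvalues are distinct. As `∑ k, P k = 1`, this forces `a = 0`.
-/

section Semiring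

variable {R A ι : Type*} [CommSemiring R] [Semiring A] [Algebra R A] [Fintype ι] {e : ι → A}

theorem mul_sum_smul_of_orthogonalIdempotents (he : OrthogonalIdempotents e) (c : ι → R) (i : ι) :
    e i * ∑ k, c k • e k = c i • e i := by
  classical
  simp [Finset.mul_sum, he.mul_eq]

theorem sum_smul_mul_of_orthogonalIdempotents (he : OrthogonalIdempotents e) (c : ι → R) (i : ι) :
    (∑ k, c k • e k) * e i = c i • e i := by
  classical
  simp [Finset.sum_mul, he.mul_eq]

theorem commute_sum_smul_sum_smul (he : OrthogonalIdempotents e) (b c : ι → R) :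
    Commute (∑ k, b k • e k) (∑ k, c k • e k) :=
  Commute.sum_left _ _ _ fun i _ => Commute.smul_left
    ((mul_sum_smul_of_orthogonalIdempotents he c i).trans
      (sum_smul_mul_of_orthogonalIdempotents he c i).symm) (b i)

theorem eq_zero_of_forall_mul_mul_eq_zero (he : ∑ k, e k = 1) {a : A}
    (h : ∀ i j, e i * a * e j = 0) : a = 0 :=
  calc
    a = (∑ i, e i) * a * ∑ j, e j := by rw [he, one_mul, mul_one]
    _ = 0 := by simp only [Finset.sum_mul, Finset.mul_sum, h, Finset.sum_const_zero]

end Semiring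

theorem mul_mul_eq_zero_of_commute_sum_smul {R A ι : Type*} [CommRing R] [IsDomain R] [Ring A]
    [Algebra R A] [Module.IsTorsionFree R A] [Fintype ι] {e : ι → A} {c : ι → R}
    (he : OrthogonalIdempotents e) {a : A} (ha : Commute (∑ k, c k • e k) a) {i j : ι}
    (hij : c i ≠ c j) : e i * a * e j = 0 := by
  have eigenvalue_eq : c i • (e i * a * e j) = c j • (e i * a * e j) :=
    calc
      c i • (e i * a * e j) = e i * ((∑ k, c k • e k) * a) * e j := by
        rw [← mul_assoc, mul_sum_smul_of_orthogonalIdempotents he, smul_mul_assoc, smul_mul_assoc]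
      _ = e i * a * ((∑ k, c k • e k) * e j) := by rw [ha.eq, mul_assoc, mul_assoc, mul_assoc]
      _ = c j • (e i * a * e j) := by
        rw [sum_smul_mul_of_orthogonalIdempotents he, mul_smul_comm]
  rw [← sub_eq_zero, ← sub_smul, smul_eq_zero] at eigenvalue_eq
  exact eigenvalue_eq.resolve_left (sub_ne_zero.mpr hij)

/-- `d` is an infinitesimal variation of the family `e` of orthogonal idempotents: it satisfies the
Leibniz identities obtained by differentiating `e j * e k = δ_jk e j`. Over the dual numbers this
says that, to first order in `ε`, the elements `e k + ε d k` are again orthogonal idempotents. -/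
structure IsIdempotentVariation {A ι : Type*} [Ring A] (e d : ι → A) : Prop where
  idem : ∀ k, d k * e k + e k * d k = d k
  ortho : Pairwise fun j k => d j * e k + e j * d k = 0

namespace IsIdempotentVariation

variable {A ι : Type*} [Ring A] {e d : ι → A}

theorem mul_mul_self_eq_zero (hd : IsIdempotentVariation e d) (he : OrthogonalIdempotents e)
    (i k : ι) : e i * d k * e i = 0 := by
  rcases eq_or_ne i k with rfl | hik
  · have corner_add_self : e i * d i * e i + e i * d i * e i = e i * d i * e i :=
      calc
        e i * d i * e i + e i * d i * e i
            = e i * d i * (e i * e i) + e i * e i * d i * e i := by rw [(he.idem i).eq]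
        _ = e i * (d i * e i + e i * d i) * e i := by noncomm_ring
        _ = e i * d i * e i := by rw [hd.idem]
    exact add_eq_left.mp corner_add_self
  · calc
      e i * d k * e i = (d i * e k + e i * d k) * e i - d i * (e k * e i) := by noncomm_ring
      _ = 0 := by rw [hd.ortho hik, he.ortho hik.symm, zero_mul, mul_zero, sub_zero]

theorem commute_sum_smul_iff {R : Type*} [CommRing R] [IsDomain R] [Algebra R A]
    [Module.IsTorsionFree R A] [Fintype ι] (hd : IsIdempotentVariation e d)
    (he : CompleteOrthogonalIdempotents e) {c : ι → R} (hc : Function.Injective c) :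
    Commute (∑ k, c k • e k) (∑ k, c k • d k) ↔ ∑ k, c k • d k = 0 := by
  refine ⟨fun hcomm => ?_, fun h => h ▸ Commute.zero_right _⟩
  refine eq_zero_of_forall_mul_mul_eq_zero he.complete fun i j => ?_
  rcases eq_or_ne i j with rfl | hij
  · simp only [Finset.mul_sum, Finset.sum_mul, mul_smul_comm, smul_mul_assoc,
      hd.mul_mul_self_eq_zero he.toOrthogonalIdempotents, smul_zero, Finset.sum_const_zero]
  · exact mul_mul_eq_zero_of_commute_sum_smul he.toOrthogonalIdempotents hcomm (hc.ne hij)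

end IsIdempotentVariation

theorem hasDerivAt_sum_smul {𝕜 𝕂 F ι : Type*} [NontriviallyNormedField 𝕜] [NormedField 𝕂]
    [NormedAlgebra 𝕜 𝕂] [NormedAddCommGroup F] [NormedSpace 𝕜 F] [NormedSpace 𝕂 F]
    [IsScalarTower 𝕜 𝕂 F] [Fintype ι] {c : ι → 𝕜 → 𝕂} {c' : ι → 𝕂} {f : ι → 𝕜 → F} {f' : ι → F}
    {t : 𝕜} (hc : ∀ k, HasDerivAt (c k) (c' k) t) (hf : ∀ k, HasDerivAt (f k) (f' k) t) :
    HasDerivAt (fun s => ∑ k, c k s • f k s) (∑ k, c' k • f k t + ∑ k, c k t • f' k) t := by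
  rw [add_comm, ← Finset.sum_add_distrib]
  exact HasDerivAt.fun_sum fun k _ => (hc k).smul (hf k)

section Derivative

open scoped Topology

variable {𝕜 A ι : Type*} [NontriviallyNormedField 𝕜] [NormedRing A] [NormedAlgebra 𝕜 A]
  {P : ι → 𝕜 → A} {P' : ι → A} {θ : 𝕜}

theorem isIdempotentVariation_of_hasDerivAt (hP : ∀ k, HasDerivAt (P k) (P' k) θ)
    (hidem : ∀ᶠ t in 𝓝 θ, OrthogonalIdempotents (P · t)) :
    IsIdempotentVariation (P · θ) P' where
  idem k := ((hP k).mul (hP k)).unique <|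
    (hP k).congr_of_eventuallyEq <| hidem.mono fun _ ht => (ht.idem k).eq
  ortho j k hjk := ((hP j).mul (hP k)).unique <|
    (hasDerivAt_const θ 0).congr_of_eventuallyEq <| hidem.mono fun _ ht => ht.ortho hjk

variable [Fintype ι] {𝕂 : Type*} [NormedField 𝕂] [NormedAlgebra 𝕜 𝕂] [NormedAlgebra 𝕂 A]
  [IsScalarTower 𝕜 𝕂 A] {lam : ι → 𝕜 → 𝕂} {lam' : ι → 𝕂}

theorem commutes_with_derivative_iff_general (hlamdist : Function.Injective (lam · θ))
    (hlam : ∀ k, HasDerivAt (lam k) (lam' k) θ) (hP : ∀ k, HasDerivAt (P k) (P' k) θ)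
    (hidem : ∀ᶠ t in 𝓝 θ, CompleteOrthogonalIdempotents (P · t)) {ρ' : A}
    (hρ' : HasDerivAt (fun t => ∑ k, lam k t • P k t) ρ' θ) :
    Commute (∑ k, lam k θ • P k θ) ρ' ↔ ∑ k, lam k θ • P' k = 0 := by
  have he : CompleteOrthogonalIdempotents (P · θ) := hidem.self_of_nhds
  have hd : IsIdempotentVariation (P · θ) P' :=
    isIdempotentVariation_of_hasDerivAt hP (hidem.mono fun _ ht => ht.toOrthogonalIdempotents)
  have hdiag : Commute (∑ k, lam k θ • P k θ) (∑ k, lam' k • P k θ) :=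
    commute_sum_smul_sum_smul he.toOrthogonalIdempotents _ _
  rw [hρ'.unique (hasDerivAt_sum_smul hlam hP), ← hd.commute_sum_smul_iff he hlamdist]
  exact ⟨fun h => by simpa only [add_sub_cancel_left] using h.sub_right hdiag, hdiag.add_right⟩

end Derivative

theorem hasDerivAt_matrix_iff {𝕜 E m n : Type*} [NontriviallyNormedField 𝕜] [NormedAddCommGroup E]
    [NormedSpace 𝕜 E] [Finite m] [Finite n] {M : 𝕜 → Matrix m n E} {M' : Matrix m n E} {θ : 𝕜} :
    HasDerivAt M M' θ ↔ ∀ i j, HasDerivAt (fun t => M t i j) (M' i j) θ := by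
  have := Fintype.ofFinite m
  have := Fintype.ofFinite n
  exact hasDerivAt_pi.trans (forall_congr' fun _ => hasDerivAt_pi)

/-- Let `ρ_θ = Σ_k λ_k(θ)P_k(θ)` with `λ_k : ℝ → (0,∞)` differentiable and pairwise distinct,
and `P_k : ℝ → Mₙ(ℂ)` a differentiable family of mutually orthogonal Hermitian projections
summing to the identity.  Then `ρ_θ` commutes with its derivative
`ρ_θ' = Σ_k λ_k'(θ)P_k(θ) + Σ_k λ_k(θ)P_k'(θ)` for every `θ` if and only if
`Σ_k λ_k(θ)P_k'(θ) = 0` for every `θ`. -/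
theorem commutes_with_derivative_iff {n N : ℕ}
    (lam lam' : Fin N → ℝ → ℝ)
    (P P' : Fin N → ℝ → Matrix (Fin n) (Fin n) ℂ)
    (hlampos : ∀ k θ, 0 < lam k θ)
    (hlamdist : ∀ j k θ, j ≠ k → lam j θ ≠ lam k θ)
    (hlamderiv : ∀ k θ, HasDerivAt (lam k) (lam' k θ) θ)
    (hPderiv : ∀ k i₁ i₂ θ, HasDerivAt (fun t => P k t i₁ i₂) (P' k θ i₁ i₂) θ)
    (hherm : ∀ k θ, (P k θ).IsHermitian)
    (horth : ∀ j k θ, P j θ * P k θ = if j = k then P j θ else 0)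
    (hsum : ∀ θ, ∑ k, P k θ = 1)
    (ρ ρ' : ℝ → Matrix (Fin n) (Fin n) ℂ)
    (hρ : ∀ θ, ρ θ = ∑ k, (lam k θ : ℂ) • P k θ)
    (hρ' : ∀ θ, ρ' θ = ∑ k, (lam' k θ : ℂ) • P k θ + ∑ k, (lam k θ : ℂ) • P' k θ) :
    (∀ θ, ρ θ * ρ' θ = ρ' θ * ρ θ) ↔ (∀ θ, ∑ k, (lam k θ : ℂ) • P' k θ = 0) := by
  have hidem (t : ℝ) : CompleteOrthogonalIdempotents (P · t) :=
    ⟨OrthogonalIdempotents.iff_mul_eq.mpr fun j k => horth j k t, hsum t⟩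
  have hinj (θ : ℝ) : Function.Injective fun k => (lam k θ : ℂ) := fun j k hjk =>
    by_contra fun hne => hlamdist j k θ hne (Complex.ofReal_injective hjk)
  have hlam (θ : ℝ) (k : Fin N) : HasDerivAt (fun t => (lam k t : ℂ)) (lam' k θ : ℂ) θ :=
    (hlamderiv k θ).ofReal_comp
  have hP (θ : ℝ) (k : Fin N) : HasDerivAt (P k) (P' k θ) θ :=
    hasDerivAt_matrix_iff.mpr fun i j => hPderiv k i j θ
  refine forall_congr' fun θ => ?_
  rw [hρ, hρ']
  -- Any submultiplicative norm would do: all of them induce the entrywise topology.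
  open scoped Matrix.Norms.Operator in
  exact commutes_with_derivative_iff_general (lam := fun k t => (lam k t : ℂ)) (hinj θ) (hlam θ)
    (hP θ) (.of_forall hidem) (hasDerivAt_sum_smul (hlam θ) (hP θ))
end

section
/- Let H be a complex Hilbert space with orthonormal basis (e_k)_{k∈ℕ}, let (λ_k)_{k∈ℕ} be reals with 0 < λ_k < 1, let (a_k)_{k∈ℕ} be reals with C₁ := sup_k |a_k| < ∞, and let (v_k)_{k∈ℕ} be vectors in H orthogonal in the sense used below with C₂² := Σ_k (ln λ_k)²‖v_k‖² < ∞. Then for every f ∈ H the series T f := Σ_k a_k ⟨e_k, f⟩ e_k + Σ_k (ln λ_k)(⟨e_k, f⟩ v_k + ⟨v_k, f⟩ e_k) converges in H, and ‖T f‖ ≤ (C₁ + 2C₂)‖f‖; in particular T is a bounded linear operator with ‖T‖ ≤ sup_k |a_k| + 2(Σ_k (ln λ_k)² ‖v_k‖²)^{1/2}. -/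
open scoped InnerProductSpace

/-!
The series splits into three. The diagonal part `∑ₖ aₖ⟪eₖ, f⟫ eₖ` is controlled by Parseval and
Bessel. With `wₖ = (ln λₖ) vₖ`, which is square summable, the part `∑ₖ ⟪eₖ, f⟫ wₖ` converges
absolutely by Cauchy–Schwarz and Bessel, with norm at most `(∑ₖ ‖wₖ‖²)^{1/2} ‖f‖`. The remaining
part `∑ₖ ⟪wₖ, f⟫ eₖ` need not converge absolutely, but its terms are orthogonal and
`|⟪wₖ, f⟫| ≤ ‖wₖ‖ ‖f‖`, so Parseval gives it the same bound.
-/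

section CauchySchwarz

variable {ι : Type*}

theorem summable_and_tsum_mul_le_sqrt_mul_sqrt {x y : ι → ℝ} (hx : ∀ k, 0 ≤ x k)
    (hy : ∀ k, 0 ≤ y k) (hx2 : Summable fun k => x k ^ 2) (hy2 : Summable fun k => y k ^ 2) :
    (Summable fun k => x k * y k) ∧
      ∑' k, x k * y k ≤ √(∑' k, x k ^ 2) * √(∑' k, y k ^ 2) := by
  simpa only [Real.rpow_two, Real.sqrt_eq_rpow] using
    Real.summable_and_inner_le_Lp_mul_Lq_tsum_of_nonneg Real.HolderConjugate.two_two hx hy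
      (by simpa only [Real.rpow_two] using hx2) (by simpa only [Real.rpow_two] using hy2)

variable {𝕜 E : Type*} [NormedField 𝕜] [SeminormedAddCommGroup E] [NormedSpace 𝕜 E]
  {c : ι → 𝕜} {w : ι → E}

theorem summable_norm_smul_of_summable_norm_sq (hc : Summable fun k => ‖c k‖ ^ 2)
    (hw : Summable fun k => ‖w k‖ ^ 2) : Summable fun k => ‖c k • w k‖ := by
  simpa only [norm_smul] using (summable_and_tsum_mul_le_sqrt_mul_sqrt
    (fun k => norm_nonneg (c k)) (fun k => norm_nonneg (w k)) hc hw).1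

theorem norm_tsum_smul_le_sqrt_mul_sqrt (hc : Summable fun k => ‖c k‖ ^ 2)
    (hw : Summable fun k => ‖w k‖ ^ 2) :
    ‖∑' k, c k • w k‖ ≤ √(∑' k, ‖c k‖ ^ 2) * √(∑' k, ‖w k‖ ^ 2) :=
  calc ‖∑' k, c k • w k‖ ≤ ∑' k, ‖c k • w k‖ :=
        norm_tsum_le_tsum_norm (summable_norm_smul_of_summable_norm_sq hc hw)
    _ = ∑' k, ‖c k‖ * ‖w k‖ := by simp only [norm_smul]
    _ ≤ √(∑' k, ‖c k‖ ^ 2) * √(∑' k, ‖w k‖ ^ 2) :=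
        (summable_and_tsum_mul_le_sqrt_mul_sqrt
          (fun k => norm_nonneg (c k)) (fun k => norm_nonneg (w k)) hc hw).2

end CauchySchwarz

section Orthonormal

variable {𝕜 ι H : Type*} [RCLike 𝕜] [NormedAddCommGroup H] [InnerProductSpace 𝕜 H] {e : ι → H}

theorem sqrt_tsum_norm_inner_sq_le (he : Orthonormal 𝕜 e) (f : H) :
    √(∑' k, ‖⟪e k, f⟫_𝕜‖ ^ 2) ≤ ‖f‖ :=
  (Real.sqrt_le_left (norm_nonneg f)).2 (he.tsum_inner_products_le f)

section

variable {E : Type*} [SeminormedAddCommGroup E] [NormedSpace 𝕜 E]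

theorem summable_inner_smul [CompleteSpace E] (he : Orthonormal 𝕜 e) {w : ι → E}
    (hw : Summable fun k => ‖w k‖ ^ 2) (f : H) :
    Summable fun k => ⟪e k, f⟫_𝕜 • w k :=
  (summable_norm_smul_of_summable_norm_sq (he.inner_products_summable f) hw).of_norm

theorem norm_tsum_inner_smul_le (he : Orthonormal 𝕜 e) {w : ι → E}
    (hw : Summable fun k => ‖w k‖ ^ 2) (f : H) :
    ‖∑' k, ⟪e k, f⟫_𝕜 • w k‖ ≤ √(∑' k, ‖w k‖ ^ 2) * ‖f‖ :=
  calc ‖∑' k, ⟪e k, f⟫_𝕜 • w k‖ ≤ √(∑' k, ‖⟪e k, f⟫_𝕜‖ ^ 2) * √(∑' k, ‖w k‖ ^ 2) :=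
        norm_tsum_smul_le_sqrt_mul_sqrt (he.inner_products_summable f) hw
    _ ≤ ‖f‖ * √(∑' k, ‖w k‖ ^ 2) := by
        gcongr
        exact sqrt_tsum_norm_inner_sq_le he f
    _ = √(∑' k, ‖w k‖ ^ 2) * ‖f‖ := mul_comm _ _

end

theorem hasSum_norm_sq_of_hasSum_smul_orthonormal (he : Orthonormal 𝕜 e) {c : ι → 𝕜} {x : H}
    (hx : HasSum (fun k => c k • e k) x) : HasSum (fun k => ‖c k‖ ^ 2) (‖x‖ ^ 2) := by
  have norm_sq_sum (s : Finset ι) : ‖∑ k ∈ s, c k • e k‖ ^ 2 = ∑ k ∈ s, ‖c k‖ ^ 2 := by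
    simpa only [LinearIsometry.toSpanSingleton_apply] using he.orthogonalFamily.norm_sum c s
  exact (hx.norm.pow 2).congr norm_sq_sum

variable [CompleteSpace H]

theorem summable_smul_orthonormal_iff (he : Orthonormal 𝕜 e) {c : ι → 𝕜} :
    (Summable fun k => c k • e k) ↔ Summable fun k => ‖c k‖ ^ 2 := by
  simpa only [LinearIsometry.toSpanSingleton_apply] using
    he.orthogonalFamily.summable_iff_norm_sq_summable c

theorem summable_smul_orthonormal_of_le (he : Orthonormal 𝕜 e) {c : ι → 𝕜} {x : ι → ℝ}
    (hx : Summable fun k => x k ^ 2) (hc : ∀ k, ‖c k‖ ≤ x k) : Summable fun k => c k • e k :=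
  (summable_smul_orthonormal_iff he).2 <|
    hx.of_nonneg_of_le (fun k => sq_nonneg _) fun k => by gcongr; exact hc k

theorem norm_tsum_smul_orthonormal_le (he : Orthonormal 𝕜 e) {c : ι → 𝕜} {x : ι → ℝ}
    (hx : Summable fun k => x k ^ 2) (hc : ∀ k, ‖c k‖ ≤ x k) :
    ‖∑' k, c k • e k‖ ≤ √(∑' k, x k ^ 2) := by
  have parseval := hasSum_norm_sq_of_hasSum_smul_orthonormal he
    (summable_smul_orthonormal_of_le he hx hc).hasSum
  exact Real.le_sqrt_of_sq_le <|
    hasSum_le (fun k => pow_le_pow_left₀ (norm_nonneg _) (hc k) 2) parseval hx.hasSum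

theorem summable_diagonal_smul (he : Orthonormal 𝕜 e) {a : ι → 𝕜} {C : ℝ}
    (ha : ∀ k, ‖a k‖ ≤ C) (f : H) : Summable fun k => (a k * ⟪e k, f⟫_𝕜) • e k :=
  summable_smul_orthonormal_of_le he (x := fun k => C * ‖⟪e k, f⟫_𝕜‖)
    (by simpa only [mul_pow] using (he.inner_products_summable f).mul_left (C ^ 2))
    fun k => by rw [norm_mul]; gcongr; exact ha k

theorem norm_tsum_diagonal_smul_le (he : Orthonormal 𝕜 e) {a : ι → 𝕜} {C : ℝ} (hC : 0 ≤ C)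
    (ha : ∀ k, ‖a k‖ ≤ C) (f : H) : ‖∑' k, (a k * ⟪e k, f⟫_𝕜) • e k‖ ≤ C * ‖f‖ :=
  calc ‖∑' k, (a k * ⟪e k, f⟫_𝕜) • e k‖ ≤ √(∑' k, (C * ‖⟪e k, f⟫_𝕜‖) ^ 2) :=
        norm_tsum_smul_orthonormal_le he
          (by simpa only [mul_pow] using (he.inner_products_summable f).mul_left (C ^ 2))
          fun k => by rw [norm_mul]; gcongr; exact ha k
    _ = C * √(∑' k, ‖⟪e k, f⟫_𝕜‖ ^ 2) := by
        simp only [mul_pow, tsum_mul_left, Real.sqrt_mul (sq_nonneg C), Real.sqrt_sq hC]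
    _ ≤ C * ‖f‖ := by
        gcongr
        exact sqrt_tsum_norm_inner_sq_le he f

variable {K : Type*} [SeminormedAddCommGroup K] [InnerProductSpace 𝕜 K]

theorem summable_inner_smul_orthonormal (he : Orthonormal 𝕜 e) {w : ι → K}
    (hw : Summable fun k => ‖w k‖ ^ 2) (f : K) : Summable fun k => ⟪w k, f⟫_𝕜 • e k :=
  summable_smul_orthonormal_of_le he
    (by simpa only [mul_pow] using hw.mul_right (‖f‖ ^ 2)) fun k => norm_inner_le_norm (w k) f

theorem norm_tsum_inner_smul_orthonormal_le (he : Orthonormal 𝕜 e) {w : ι → K}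
    (hw : Summable fun k => ‖w k‖ ^ 2) (f : K) :
    ‖∑' k, ⟪w k, f⟫_𝕜 • e k‖ ≤ √(∑' k, ‖w k‖ ^ 2) * ‖f‖ :=
  calc ‖∑' k, ⟪w k, f⟫_𝕜 • e k‖ ≤ √(∑' k, (‖w k‖ * ‖f‖) ^ 2) :=
        norm_tsum_smul_orthonormal_le he
          (by simpa only [mul_pow] using hw.mul_right (‖f‖ ^ 2))
          fun k => norm_inner_le_norm (w k) f
    _ = √(∑' k, ‖w k‖ ^ 2) * ‖f‖ := by
        simp only [mul_pow, tsum_mul_right, Real.sqrt_mul' _ (sq_nonneg ‖f‖),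
          Real.sqrt_sq (norm_nonneg f)]

end Orthonormal

theorem bvn_ld_bounded_general {𝕜 ι H : Type*} [RCLike 𝕜] [NormedAddCommGroup H]
    [InnerProductSpace 𝕜 H] [CompleteSpace H] {e : ι → H} (he : Orthonormal 𝕜 e)
    {a : ι → 𝕜} {C₁ : ℝ} (hC₁ : 0 ≤ C₁) (ha : ∀ k, ‖a k‖ ≤ C₁)
    {ℓ : ι → 𝕜} {v : ι → H} {C₂ : ℝ} (hC₂ : 0 ≤ C₂)
    (hℓv : HasSum (fun k => ‖ℓ k‖ ^ 2 * ‖v k‖ ^ 2) (C₂ ^ 2)) (f : H) :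
    Summable (fun k =>
      (a k * ⟪e k, f⟫_𝕜) • e k + ℓ k • (⟪e k, f⟫_𝕜 • v k + ⟪v k, f⟫_𝕜 • e k)) ∧
    ‖∑' k, ((a k * ⟪e k, f⟫_𝕜) • e k + ℓ k • (⟪e k, f⟫_𝕜 • v k + ⟪v k, f⟫_𝕜 • e k))‖ ≤
      (C₁ + 2 * C₂) * ‖f‖ := by
  have norm_sq_ℓv : HasSum (fun k => ‖ℓ k • v k‖ ^ 2) (C₂ ^ 2) := by
    simpa only [norm_smul, mul_pow] using hℓv
  have norm_sq_conj_ℓv : HasSum (fun k => ‖star (ℓ k) • v k‖ ^ 2) (C₂ ^ 2) := by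
    simpa only [norm_smul, norm_star, mul_pow] using hℓv
  have split (k : ι) : ℓ k • (⟪e k, f⟫_𝕜 • v k + ⟪v k, f⟫_𝕜 • e k) =
      ⟪e k, f⟫_𝕜 • ℓ k • v k + ⟪star (ℓ k) • v k, f⟫_𝕜 • e k := by
    rw [smul_add, smul_comm, inner_smul_left, starRingEnd_apply, star_star, mul_smul]
  have diagonal := summable_diagonal_smul he ha f
  have analysis := summable_inner_smul he norm_sq_ℓv.summable f
  have synthesis := summable_inner_smul_orthonormal he norm_sq_conj_ℓv.summable f
  have diagonal_le := norm_tsum_diagonal_smul_le he hC₁ ha f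
  have analysis_le := norm_tsum_inner_smul_le he norm_sq_ℓv.summable f
  have synthesis_le := norm_tsum_inner_smul_orthonormal_le he norm_sq_conj_ℓv.summable f
  rw [norm_sq_ℓv.tsum_eq, Real.sqrt_sq hC₂] at analysis_le
  rw [norm_sq_conj_ℓv.tsum_eq, Real.sqrt_sq hC₂] at synthesis_le
  simp only [split]
  refine ⟨diagonal.add (analysis.add synthesis), ?_⟩
  rw [diagonal.tsum_add (analysis.add synthesis), analysis.tsum_add synthesis, ← add_assoc]
  refine norm_add₃_le.trans ((add_le_add_three diagonal_le analysis_le synthesis_le).trans_eq ?_)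
  ring

/-- Boundedness of the Boltzmann–von Neumann logarithmic derivative: let `(e_k)` be an
orthonormal basis of a complex Hilbert space `H`, `(λ_k)` reals in `(0,1)`, `(a_k)` reals
with `|a_k| ≤ C₁`, and `(v_k)` vectors with `Σ_k (ln λ_k)²‖v_k‖² = C₂²`.  Then for every
`f ∈ H` the series `T f = Σ_k a_k⟨e_k,f⟩e_k + Σ_k (ln λ_k)(⟨e_k,f⟩v_k + ⟨v_k,f⟩e_k)`
converges in `H` and `‖T f‖ ≤ (C₁ + 2C₂)‖f‖`. -/
theorem bvn_ld_bounded {H : Type*} [NormedAddCommGroup H]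
    [InnerProductSpace ℂ H] [CompleteSpace H]
    (e : ℕ → H) (honb : Orthonormal ℂ e)
    (hdense : (Submodule.span ℂ (Set.range e)).topologicalClosure = ⊤)
    (lam : ℕ → ℝ) (hlam : ∀ k, lam k ∈ Set.Ioo (0 : ℝ) 1)
    (a : ℕ → ℝ) (C₁ : ℝ) (hC₁ : ∀ k, |a k| ≤ C₁)
    (v : ℕ → H) (C₂ : ℝ) (hC₂ : 0 ≤ C₂)
    (hC₂sum : HasSum (fun k => (Real.log (lam k)) ^ 2 * ‖v k‖ ^ 2) (C₂ ^ 2)) :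
    ∀ f : H,
      Summable (fun k =>
        ((a k : ℂ) * ⟪e k, f⟫_ℂ) • e k +
          ((Real.log (lam k) : ℂ)) • ((⟪e k, f⟫_ℂ) • v k + (⟪v k, f⟫_ℂ) • e k)) ∧
      ‖∑' k, (((a k : ℂ) * ⟪e k, f⟫_ℂ) • e k +
          ((Real.log (lam k) : ℂ)) • ((⟪e k, f⟫_ℂ) • v k + (⟪v k, f⟫_ℂ) • e k))‖ ≤
        (C₁ + 2 * C₂) * ‖f‖ :=
  bvn_ld_bounded_general honb ((abs_nonneg _).trans (hC₁ 0)) (by simpa using hC₁) hC₂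
    (by simpa using hC₂sum)
end

section
/- Quantum Cramér–Rao bound for the LD₂ model: let ρ ∈ M_n(ℂ) be a positive definite Hermitian matrix with Tr ρ = 1, let ρ' be a Hermitian matrix with Tr ρ' = 0, let Θ be a Hermitian matrix and θ ∈ ℝ a real number such that Tr(ρ'(Θ − θI)) = 1. Then Tr(ρ(Θ − θI)²) · Tr(ρ'ρ^{−1}ρ') ≥ 1; equivalently Var_θ(Θ) = Tr(ρ(Θ − θI)²) ≥ 1/Tr(ρ Ĥ²) where Ĥ = ρ^{−1/2}ρ'ρ^{−1/2} and Tr(ρĤ²) = Tr(ρ'ρ^{−1}ρ'). -/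
open Matrix
open scoped ComplexOrder MatrixOrder

/-!
The form `⟪X, Y⟫ = Tr(Y ρ Xᴴ)` on matrices is positive semidefinite. Cauchy–Schwarz for it, applied
to `X = ρ'ρ⁻¹` and `Y = Θ - θI`, gives the bound, since `ρ` cancels against `ρ⁻¹` in the cross term.
The two expressions for the Fisher information agree because `ρĤ²` is the conjugate of `ρ'ρ⁻¹ρ'`
by `ρ^{1/2}`.
-/

section WeightedTrace

variable {ι 𝕜 : Type*} [Fintype ι] [RCLike 𝕜]

theorem sq_norm_trace_mul_mul_conjTranspose_le {M : Matrix ι ι 𝕜} (hM : M.PosSemidef)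
    (X Y : Matrix ι ι 𝕜) :
    ‖(Y * M * Xᴴ).trace‖ ^ 2 ≤
      RCLike.re (Y * M * Yᴴ).trace * RCLike.re (X * M * Xᴴ).trace := by
  let := M.toMatrixSeminormedAddCommGroup hM
  let := M.toMatrixInnerProductSpace hM
  calc ‖(Y * M * Xᴴ).trace‖ ^ 2 = ‖inner 𝕜 Y X‖ * ‖inner 𝕜 X Y‖ := by
        rw [norm_inner_symm Y X, sq]; rfl
    _ ≤ RCLike.re (inner 𝕜 Y Y) * RCLike.re (inner 𝕜 X X) := inner_mul_inner_self_le Y X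

theorem sq_norm_trace_mul_conjTranspose_le [DecidableEq ι] {M : Matrix ι ι 𝕜} (hM : M.PosDef)
    (X Y : Matrix ι ι 𝕜) :
    ‖(Y * Xᴴ).trace‖ ^ 2 ≤
      RCLike.re (Y * M * Yᴴ).trace * RCLike.re (X * M⁻¹ * Xᴴ).trace := by
  have hdet : IsUnit M.det := (isUnit_iff_isUnit_det M).mp hM.isUnit
  have hadj : (X * M⁻¹)ᴴ = M⁻¹ * Xᴴ := by rw [conjTranspose_mul, hM.inv.isHermitian.eq]
  have hcross : Y * M * (X * M⁻¹)ᴴ = Y * Xᴴ := by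
    rw [hadj, Matrix.mul_assoc, mul_nonsing_inv_cancel_left _ _ hdet]
  have hself : X * M⁻¹ * M * (X * M⁻¹)ᴴ = X * M⁻¹ * Xᴴ := by
    rw [hadj, nonsing_inv_mul_cancel_right _ _ hdet, Matrix.mul_assoc]
  simpa only [hcross, hself] using
    sq_norm_trace_mul_mul_conjTranspose_le hM.posSemidef (X * M⁻¹) Y

end WeightedTrace

theorem trace_mul_inv_mul_eq_trace_mul_sq_of_isUnit {ι R : Type*} [Fintype ι] [DecidableEq ι]
    [CommRing R] {S : Matrix ι ι R} (hS : IsUnit S) (X : Matrix ι ι R) :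
    (X * (S * S)⁻¹ * X).trace = (S * S * (S⁻¹ * X * S⁻¹) ^ 2).trace := by
  have hdet : IsUnit S.det := (isUnit_iff_isUnit_det S).mp hS
  have hconj : S * S * (S⁻¹ * X * S⁻¹) ^ 2 = S * (X * (S * S)⁻¹ * X) * S⁻¹ := by
    simp only [sq, Matrix.mul_inv_rev, Matrix.mul_assoc, mul_nonsing_inv_cancel_left _ _ hdet]
  rw [hconj, trace_mul_comm _ S⁻¹, nonsing_inv_mul_cancel_left _ _ hdet]

theorem trace_mul_inv_mul_eq_trace_mul_sq_sqrt {ι 𝕜 : Type*} [Fintype ι] [DecidableEq ι]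
    [RCLike 𝕜] {ρ : Matrix ι ι 𝕜} (hρ : ρ.PosDef) (X : Matrix ι ι 𝕜) :
    (X * ρ⁻¹ * X).trace = (ρ * ((CFC.sqrt ρ)⁻¹ * X * (CFC.sqrt ρ)⁻¹) ^ 2).trace := by
  have hunit : IsUnit (CFC.sqrt ρ) := hρ.isStrictlyPositive.isUnit_cfcSqrt
  simpa only [CFC.sqrt_mul_sqrt_self ρ hρ.posSemidef.nonneg] using
    trace_mul_inv_mul_eq_trace_mul_sq_of_isUnit hunit X

theorem cramer_rao_ld2_general {ι 𝕜 : Type*} [Fintype ι] [DecidableEq ι] [RCLike 𝕜]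
    {ρ ρ' A : Matrix ι ι 𝕜} (hρ : ρ.PosDef) (hρ' : ρ'.IsHermitian) (hA : A.IsHermitian) :
    ‖(ρ' * A).trace‖ ^ 2 ≤
      RCLike.re (ρ * A ^ 2).trace * RCLike.re (ρ' * ρ⁻¹ * ρ').trace ∧
    (ρ' * ρ⁻¹ * ρ').trace =
      (ρ * ((CFC.sqrt ρ)⁻¹ * ρ' * (CFC.sqrt ρ)⁻¹) ^ 2).trace := by
  refine ⟨?_, trace_mul_inv_mul_eq_trace_mul_sq_sqrt hρ ρ'⟩
  have hvar : (A * ρ * A).trace = (ρ * A ^ 2).trace := by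
    rw [trace_mul_cycle, trace_mul_comm, sq]
  simpa only [hA.eq, hρ'.eq, hvar, trace_mul_comm A ρ'] using
    sq_norm_trace_mul_conjTranspose_le hρ ρ' A

/-- Quantum Cramér–Rao bound for the LD₂ model: if `ρ` is a positive definite state
(`Tr ρ = 1`), `ρ'` is Hermitian with `Tr ρ' = 0`, `Θ` is Hermitian, `θ ∈ ℝ`, and
`Tr(ρ'(Θ − θI)) = 1`, then `Tr(ρ(Θ − θI)²)·Tr(ρ'ρ⁻¹ρ') ≥ 1`; here
`Tr(ρ'ρ⁻¹ρ') = Tr(ρĤ²)` is the quantum Fisher information for the logarithmic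
derivative `Ĥ = ρ^{−1/2}ρ'ρ^{−1/2}`. -/
theorem cramer_rao_ld2 {n : ℕ} (ρ ρ' Θ : Matrix (Fin n) (Fin n) ℂ) (θ : ℝ)
    (hρ : ρ.PosDef) (htrρ : ρ.trace = 1)
    (hρ' : ρ'.IsHermitian) (htrρ' : ρ'.trace = 0)
    (hΘ : Θ.IsHermitian)
    (hunbiased : (ρ' * (Θ - (θ : ℂ) • 1)).trace = 1) :
    1 ≤ ((ρ * (Θ - (θ : ℂ) • 1) ^ 2).trace).re * ((ρ' * ρ⁻¹ * ρ').trace).re ∧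
    (ρ' * ρ⁻¹ * ρ').trace =
      (ρ * ((CFC.sqrt ρ)⁻¹ * ρ' * (CFC.sqrt ρ)⁻¹) ^ 2).trace := by
  have hA : (Θ - (θ : ℂ) • 1).IsHermitian :=
    hΘ.sub (isHermitian_one.smul (Complex.conj_ofReal θ))
  simpa only [hunbiased, norm_one, one_pow, RCLike.re_eq_complex_re] using
    cramer_rao_ld2_general hρ hρ' hA
end

section
/- Quantum Cramér–Rao bound for the symmetric logarithmic derivative (SLD): let ρ ∈ M_n(ℂ) be a positive definite Hermitian matrix with Tr ρ = 1, let ρ' be a Hermitian matrix with Tr ρ' = 0, let Θ be a Hermitian matrix and θ ∈ ℝ with Tr(ρ'(Θ − θI)) = 1, and let H be the Hermitian matrix satisfying (1/2)(Hρ + ρH) = ρ'. Then Tr(ρ(Θ − θI)²) · Tr(ρH²) ≥ 1; equivalently Var_θ(Θ) = Tr(ρ(Θ − θI)²) ≥ 1/Tr(ρH²). -/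
open Matrix
open scoped ComplexOrder

/-!
For a positive semidefinite matrix `ρ`, the form `⟪X, Y⟫ = Tr (Y ρ Xᴴ)` is a semi-inner product,
for which `‖Θ - θ‖²` is the variance of `Θ` and `‖H‖²` is the quantum Fisher information. Because
all the matrices are Hermitian, the two halves of `Tr (½ (H ρ + ρ H) (Θ - θ))` are complex
conjugates of each other, so unbiasedness says `Re ⟪Θ - θ, H⟫ = 1`, and the bound is the
Cauchy–Schwarz inequality.
-/

theorem star_trace_mul_mul_of_isHermitian {m R : Type*} [Fintype m] [NonUnitalSemiring R]
    [StarRing R] {A B C : Matrix m m R} (hA : A.IsHermitian) (hB : B.IsHermitian)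
    (hC : C.IsHermitian) : star (A * B * C).trace = (C * B * A).trace := by
  rw [← trace_conjTranspose, conjTranspose_mul, conjTranspose_mul, hA.eq, hB.eq, hC.eq,
    Matrix.mul_assoc]

theorem trace_mul_mul_self {m R : Type*} [Fintype m] [DecidableEq m] [CommSemiring R]
    (A B : Matrix m m R) : (A * B * A).trace = (B * A ^ 2).trace := by
  rw [Matrix.mul_assoc, trace_mul_comm, Matrix.mul_assoc, sq]

section RCLike

variable {m 𝕜 : Type*} [Fintype m] [RCLike 𝕜] {ρ A H : Matrix m m 𝕜}

theorem norm_trace_mul_mul_conjTranspose_sq_le (hρ : ρ.PosSemidef) (X Y : Matrix m m 𝕜) :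
    ‖(Y * ρ * Xᴴ).trace‖ ^ 2 ≤ RCLike.re (X * ρ * Xᴴ).trace * RCLike.re (Y * ρ * Yᴴ).trace := by
  let := ρ.toMatrixSeminormedAddCommGroup hρ
  let := ρ.toMatrixInnerProductSpace hρ
  have cauchy_schwarz := inner_mul_inner_self_le (𝕜 := 𝕜) X Y
  rw [norm_inner_symm Y X, ← sq] at cauchy_schwarz
  exact cauchy_schwarz

theorem trace_half_anticommutator_mul_eq_re (hρ : ρ.IsHermitian) (hH : H.IsHermitian)
    (hA : A.IsHermitian) :
    ((1 / 2 : 𝕜) • (H * ρ + ρ * H) * A).trace = RCLike.re (H * ρ * A).trace := by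
  have conj_trace : (ρ * H * A).trace = star (H * ρ * A).trace := by
    rw [star_trace_mul_mul_of_isHermitian hH hρ hA, trace_mul_cycle]
  rw [RCLike.re_eq_add_conj, starRingEnd_apply, smul_mul, trace_smul, add_mul, trace_add,
    conj_trace, smul_eq_mul, one_div_mul_eq_div]

theorem cramer_rao_sld_general [DecidableEq m] {ρ' : Matrix m m 𝕜} (hρ : ρ.PosSemidef)
    (hA : A.IsHermitian) (hH : H.IsHermitian)
    (hsld : (1 / 2 : 𝕜) • (H * ρ + ρ * H) = ρ') :
    ‖(ρ' * A).trace‖ ^ 2 ≤ RCLike.re (ρ * A ^ 2).trace * RCLike.re (ρ * H ^ 2).trace :=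
  calc
    ‖(ρ' * A).trace‖ ^ 2 = RCLike.re (H * ρ * A).trace ^ 2 := by
      rw [← hsld, trace_half_anticommutator_mul_eq_re hρ.isHermitian hH hA, RCLike.norm_ofReal,
        sq_abs]
    _ ≤ ‖(H * ρ * Aᴴ).trace‖ ^ 2 := by
      rw [hA.eq, ← sq_abs]
      gcongr
      exact RCLike.abs_re_le_norm _
    _ ≤ RCLike.re (A * ρ * Aᴴ).trace * RCLike.re (H * ρ * Hᴴ).trace :=
      norm_trace_mul_mul_conjTranspose_sq_le hρ A H
    _ = RCLike.re (ρ * A ^ 2).trace * RCLike.re (ρ * H ^ 2).trace := by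
      rw [hA.eq, hH.eq, trace_mul_mul_self, trace_mul_mul_self]

end RCLike

/-- Quantum Cramér–Rao bound for the symmetric logarithmic derivative (SLD): if `ρ` is a
positive definite state (`Tr ρ = 1`), `ρ'` is Hermitian with `Tr ρ' = 0`, `Θ` is Hermitian,
`θ ∈ ℝ`, `Tr(ρ'(Θ − θI)) = 1`, and `H` is the Hermitian matrix with
`(1/2)(Hρ + ρH) = ρ'`, then `Tr(ρ(Θ − θI)²)·Tr(ρH²) ≥ 1`. -/
theorem cramer_rao_sld {n : ℕ} (ρ ρ' Θ H : Matrix (Fin n) (Fin n) ℂ) (θ : ℝ)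
    (hρ : ρ.PosDef) (htrρ : ρ.trace = 1)
    (hρ' : ρ'.IsHermitian) (htrρ' : ρ'.trace = 0)
    (hΘ : Θ.IsHermitian)
    (hunbiased : (ρ' * (Θ - (θ : ℂ) • 1)).trace = 1)
    (hH : H.IsHermitian)
    (hsld : (1 / 2 : ℂ) • (H * ρ + ρ * H) = ρ') :
    1 ≤ ((ρ * (Θ - (θ : ℂ) • 1) ^ 2).trace).re * ((ρ * H ^ 2).trace).re := by
  have hA : (Θ - (θ : ℂ) • 1).IsHermitian :=
    hΘ.sub (isHermitian_one.smul (Complex.conj_ofReal θ))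
  simpa only [hunbiased, norm_one, one_pow, RCLike.re_to_complex] using
    cramer_rao_sld_general hρ.posSemidef hA hH hsld
end

section
/- Quantum Cramér–Rao bound for the Boltzmann–von Neumann model with modified variance: let ρ ∈ M_n(ℂ) be positive definite Hermitian with Tr ρ = 1, let Θ be a Hermitian matrix, θ ∈ ℝ, and let H be a Hermitian matrix such that the matrix ρ' := ∫₀¹ ρ^t H ρ^{1−t} dt satisfies Tr(ρ'(Θ − θI)) = 1. Then (∫₀¹ ‖ρ^{(1−t)/2} H ρ^{t/2}‖₂² dt) · (∫₀¹ ‖ρ^{(1−t)/2}(Θ − θI)ρ^{t/2}‖₂² dt) ≥ 1; i.e., the modified variance V̆_ρ(Θ) = ∫₀¹ ‖ρ^{(1−t)/2}(Θ − θI)ρ^{t/2}‖₂² dt satisfies V̆_ρ(Θ) ≥ 1/İ where İ = ∫₀¹ ‖ρ^{(1−t)/2} H ρ^{t/2}‖₂² dt is the modified quantum Fisher information. -/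
/-!
The pairing `⟪A, B⟫ = ∫₀¹ Tr(ρ^t A* ρ^{1−t} B) dt` is a positive semidefinite sesquilinear form on
matrices. By cyclicity of the trace its quadratic form is `∫₀¹ ‖ρ^{(1−t)/2} A ρ^{t/2}‖₂² dt`, while
`Tr(ρ' X) = ⟪H*, X⟫`, so the bound is the Cauchy–Schwarz inequality for this form, combined with
`⟪H*, H*⟫ = ⟪H, H⟫`, which is the substitution `t ↦ 1 − t`.
-/

open Matrix
open scoped ComplexOrder

/-- The `s`-th power `ρ^s` of a positive definite matrix `ρ`, defined spectrally. -/
noncomputable def mpow {n : ℕ} {ρ : Matrix (Fin n) (Fin n) ℂ} (hρ : ρ.PosDef)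
    (s : ℝ) : Matrix (Fin n) (Fin n) ℂ :=
  hρ.1.cfc fun x : ℝ => x ^ s

/-- The squared Hilbert–Schmidt (Frobenius) norm `‖A‖₂² = Tr(A*A)`. -/
noncomputable def hsNormSq {n : ℕ} (A : Matrix (Fin n) (Fin n) ℂ) : ℝ :=
  ((Aᴴ * A).trace).re

theorem trace_of_intervalIntegral_mul {m n 𝕜 : Type*} [Fintype m] [Fintype n] [RCLike 𝕜]
    {μ : MeasureTheory.Measure ℝ} {a b : ℝ} {F : ℝ → Matrix m n 𝕜}
    (hF : ∀ i j, IntervalIntegrable (fun t => F t i j) μ a b) (X : Matrix n m 𝕜) :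
    ((of fun i j => ∫ t in a..b, F t i j ∂μ) * X).trace = ∫ t in a..b, (F t * X).trace ∂μ := by
  have hFX (i : m) (j : n) : IntervalIntegrable (fun t => F t i j * X j i) μ a b :=
    (hF i j).mul_const _
  have hrow (i : m) : IntervalIntegrable (fun t => ∑ j, F t i j * X j i) μ a b := by
    simpa only [Finset.sum_fn] using IntervalIntegrable.sum Finset.univ fun j _ => hFX i j
  simp only [trace, diag_apply, mul_apply, of_apply]
  rw [intervalIntegral.integral_finsetSum fun i _ => hrow i]
  refine Finset.sum_congr rfl fun i _ => ?_
  rw [intervalIntegral.integral_finsetSum fun j _ => hFX i j]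
  simp only [intervalIntegral.integral_mul_const]

section BogoliubovKuboMori

variable {n : ℕ}

theorem ofReal_hsNormSq (A : Matrix (Fin n) (Fin n) ℂ) : (hsNormSq A : ℂ) = (Aᴴ * A).trace :=
  (Complex.eq_re_of_ofReal_le (posSemidef_conjTranspose_mul_self A).trace_nonneg).symm

theorem hsNormSq_nonneg (A : Matrix (Fin n) (Fin n) ℂ) : 0 ≤ hsNormSq A :=
  (Complex.nonneg_iff.mp (posSemidef_conjTranspose_mul_self A).trace_nonneg).1

variable {ρ : Matrix (Fin n) (Fin n) ℂ} (hρ : ρ.PosDef)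

theorem isHermitian_mpow (s : ℝ) : (mpow hρ s).IsHermitian := by
  rw [mpow, IsHermitian.cfc, IsHermitian, ← star_eq_conjTranspose, ← map_star,
    star_eq_conjTranspose, diagonal_conjTranspose]
  congr 2
  ext i
  simp

theorem mpow_add (s t : ℝ) : mpow hρ (s + t) = mpow hρ s * mpow hρ t := by
  simp only [mpow, IsHermitian.cfc, ← map_mul, diagonal_mul_diagonal]
  congr 2
  ext i
  simp [Real.rpow_add (hρ.eigenvalues_pos i)]

theorem mpow_half_mul_mpow_half (s : ℝ) : mpow hρ (s / 2) * mpow hρ (s / 2) = mpow hρ s := by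
  rw [← mpow_add, add_halves]

theorem continuous_mpow : Continuous (mpow hρ) := by
  have hpow (i : Fin n) : Continuous fun s : ℝ => ((hρ.1.eigenvalues i ^ s : ℝ) : ℂ) :=
    Complex.continuous_ofReal.comp (Real.continuous_const_rpow (hρ.eigenvalues_pos i).ne')
  have hdiag : Continuous fun s : ℝ =>
      diagonal fun i => ((hρ.1.eigenvalues i ^ s : ℝ) : ℂ) :=
    (continuous_pi hpow).matrix_diagonal
  exact (continuous_const.matrix_mul hdiag).matrix_mul continuous_const

theorem ofReal_hsNormSq_mpow_mul_mul_mpow (A : Matrix (Fin n) (Fin n) ℂ) (s t : ℝ) :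
    (hsNormSq (mpow hρ (s / 2) * A * mpow hρ (t / 2)) : ℂ) =
      (mpow hρ t * Aᴴ * mpow hρ s * A).trace := by
  set P := mpow hρ (s / 2)
  set Q := mpow hρ (t / 2)
  have hP : Pᴴ = P := isHermitian_mpow hρ _
  have hQ : Qᴴ = Q := isHermitian_mpow hρ _
  calc (hsNormSq (P * A * Q) : ℂ)
      = (Q * (Aᴴ * (P * P) * A) * Q).trace := by
        simp only [ofReal_hsNormSq, conjTranspose_mul, hP, hQ, Matrix.mul_assoc]
    _ = (Q * Q * Aᴴ * (P * P) * A).trace := by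
        rw [trace_mul_comm]
        simp only [Matrix.mul_assoc]
    _ = (mpow hρ t * Aᴴ * mpow hρ s * A).trace := by
        rw [mpow_half_mul_mpow_half, mpow_half_mul_mpow_half]

theorem continuous_mpow_mul_mul_mpow (A : Matrix (Fin n) (Fin n) ℂ) :
    Continuous fun t : ℝ => mpow hρ t * A * mpow hρ (1 - t) :=
  ((continuous_mpow hρ).matrix_mul continuous_const).matrix_mul
    ((continuous_mpow hρ).comp (continuous_const.sub continuous_id))

/-- The Bogoliubov–Kubo–Mori inner product `∫₀¹ Tr(ρ^t A* ρ^{1−t} B) dt` at `ρ`, whose quadratic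
form is both the modified variance and the modified Fisher information. It is conjugate linear in
`A`, as in Mathlib's `inner`. -/
noncomputable def bkmInner (A B : Matrix (Fin n) (Fin n) ℂ) : ℂ :=
  ∫ t in (0 : ℝ)..1, (mpow hρ t * Aᴴ * mpow hρ (1 - t) * B).trace

theorem intervalIntegrable_bkmInner (A B : Matrix (Fin n) (Fin n) ℂ) :
    IntervalIntegrable (fun t : ℝ => (mpow hρ t * Aᴴ * mpow hρ (1 - t) * B).trace)
      MeasureTheory.volume 0 1 :=
  ((continuous_mpow_mul_mul_mpow hρ Aᴴ).matrix_mul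
    continuous_const).matrix_trace.intervalIntegrable 0 1

theorem bkmInner_add_left (A B C : Matrix (Fin n) (Fin n) ℂ) :
    bkmInner hρ (A + B) C = bkmInner hρ A C + bkmInner hρ B C := by
  simp only [bkmInner, conjTranspose_add, Matrix.mul_add, Matrix.add_mul, trace_add]
  exact intervalIntegral.integral_add (intervalIntegrable_bkmInner hρ A C)
    (intervalIntegrable_bkmInner hρ B C)

theorem bkmInner_smul_left (A B : Matrix (Fin n) (Fin n) ℂ) (c : ℂ) :
    bkmInner hρ (c • A) B = star c * bkmInner hρ A B := by
  simp only [bkmInner, conjTranspose_smul, Matrix.mul_smul, Matrix.smul_mul, trace_smul,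
    smul_eq_mul, intervalIntegral.integral_const_mul]

theorem star_bkmInner (A B : Matrix (Fin n) (Fin n) ℂ) :
    star (bkmInner hρ A B) = bkmInner hρ B A := by
  have hstar (t : ℝ) : star (mpow hρ t * Aᴴ * mpow hρ (1 - t) * B).trace =
      (mpow hρ t * Bᴴ * mpow hρ (1 - t) * A).trace := by
    rw [← trace_conjTranspose]
    simp only [conjTranspose_mul, conjTranspose_conjTranspose, (isHermitian_mpow hρ _).eq]
    rw [← Matrix.mul_assoc, ← Matrix.mul_assoc, trace_mul_comm]
    simp only [Matrix.mul_assoc]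
  simp only [bkmInner, ← hstar]
  exact intervalIntegral.intervalIntegral_conj.symm

theorem bkmInner_self (A : Matrix (Fin n) (Fin n) ℂ) :
    bkmInner hρ A A =
      ((∫ t in (0 : ℝ)..1, hsNormSq (mpow hρ ((1 - t) / 2) * A * mpow hρ (t / 2)) : ℝ) : ℂ) := by
  simp only [bkmInner, ← ofReal_hsNormSq_mpow_mul_mul_mpow, intervalIntegral.integral_ofReal]

theorem re_bkmInner_self_nonneg (A : Matrix (Fin n) (Fin n) ℂ) : 0 ≤ (bkmInner hρ A A).re := by
  rw [bkmInner_self, Complex.ofReal_re]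
  exact intervalIntegral.integral_nonneg zero_le_one fun _ _ => hsNormSq_nonneg _

theorem bkmInner_conjTranspose (A B : Matrix (Fin n) (Fin n) ℂ) :
    bkmInner hρ Aᴴ Bᴴ = bkmInner hρ B A := by
  have hcycle (t : ℝ) : (mpow hρ t * Aᴴᴴ * mpow hρ (1 - t) * Bᴴ).trace =
      (mpow hρ (1 - t) * Bᴴ * mpow hρ (1 - (1 - t)) * A).trace := by
    rw [conjTranspose_conjTranspose, sub_sub_cancel, Matrix.mul_assoc, trace_mul_comm,
      ← Matrix.mul_assoc]
  simp only [bkmInner, hcycle]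
  simpa using intervalIntegral.integral_comp_sub_left
    (fun t : ℝ => (mpow hρ t * Bᴴ * mpow hρ (1 - t) * A).trace) (a := 0) (b := 1) 1

theorem norm_bkmInner_sq_le (A B : Matrix (Fin n) (Fin n) ℂ) :
    ‖bkmInner hρ A B‖ ^ 2 ≤ (bkmInner hρ A A).re * (bkmInner hρ B B).re := by
  let core : PreInnerProductSpace.Core ℂ (Matrix (Fin n) (Fin n) ℂ) :=
    { inner := bkmInner hρ
      conj_inner_symm := fun A B => star_bkmInner hρ B A
      re_inner_nonneg := re_bkmInner_self_nonneg hρ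
      add_left := bkmInner_add_left hρ
      smul_left := bkmInner_smul_left hρ }
  calc ‖bkmInner hρ A B‖ ^ 2
      = ‖bkmInner hρ A B‖ * ‖bkmInner hρ B A‖ := by rw [← star_bkmInner hρ A B, norm_star, sq]
    _ ≤ (bkmInner hρ A A).re * (bkmInner hρ B B).re :=
        InnerProductSpace.Core.inner_mul_inner_self_le (c := core) A B

theorem trace_of_intervalIntegral_mpow_mul (H X : Matrix (Fin n) (Fin n) ℂ) :
    ((of fun i j => ∫ t in (0 : ℝ)..1, (mpow hρ t * H * mpow hρ (1 - t)) i j) * X).trace =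
      bkmInner hρ Hᴴ X := by
  rw [trace_of_intervalIntegral_mul fun i j =>
    ((continuous_mpow_mul_mul_mpow hρ H).matrix_elem i j).intervalIntegrable 0 1,
    bkmInner, conjTranspose_conjTranspose]

theorem cramer_rao_bvn_modified_general (H X : Matrix (Fin n) (Fin n) ℂ) :
    ‖((of fun i j =>
        ∫ t in (0 : ℝ)..1, (mpow hρ t * H * mpow hρ (1 - t)) i j) * X).trace‖ ^ 2 ≤
      (∫ t in (0 : ℝ)..1, hsNormSq (mpow hρ ((1 - t) / 2) * H * mpow hρ (t / 2))) *
        (∫ t in (0 : ℝ)..1, hsNormSq (mpow hρ ((1 - t) / 2) * X * mpow hρ (t / 2))) := by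
  have cauchy_schwarz := norm_bkmInner_sq_le hρ Hᴴ X
  rwa [bkmInner_conjTranspose, bkmInner_self, bkmInner_self, Complex.ofReal_re,
    Complex.ofReal_re, ← trace_of_intervalIntegral_mpow_mul] at cauchy_schwarz

end BogoliubovKuboMori

/-- Quantum Cramér–Rao bound for the Boltzmann–von Neumann model with modified variance:
if `ρ` is a positive definite state, `H` Hermitian, `Θ` Hermitian, and the matrix
`ρ' = ∫₀¹ ρ^t H ρ^{1−t} dt` satisfies `Tr(ρ'(Θ − θI)) = 1`, then
`(∫₀¹ ‖ρ^{(1−t)/2} H ρ^{t/2}‖₂² dt)·(∫₀¹ ‖ρ^{(1−t)/2}(Θ − θI)ρ^{t/2}‖₂² dt) ≥ 1`,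
i.e. the modified variance `V̆_ρ(Θ)` is at least the reciprocal of the modified quantum
Fisher information `İ`. -/
theorem cramer_rao_bvn_modified {n : ℕ}
    (ρ H Θ : Matrix (Fin n) (Fin n) ℂ) (θ : ℝ)
    (hρ : ρ.PosDef) (htrρ : ρ.trace = 1)
    (hH : H.IsHermitian) (hΘ : Θ.IsHermitian)
    (hunbiased :
      ((Matrix.of fun i j =>
          ∫ t in (0 : ℝ)..1, (mpow hρ t * H * mpow hρ (1 - t)) i j) *
        (Θ - (θ : ℂ) • 1)).trace = 1) :
    1 ≤ (∫ t in (0 : ℝ)..1, hsNormSq (mpow hρ ((1 - t) / 2) * H * mpow hρ (t / 2))) *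
        (∫ t in (0 : ℝ)..1,
          hsNormSq (mpow hρ ((1 - t) / 2) * (Θ - (θ : ℂ) • 1) * mpow hρ (t / 2))) := by
  simpa only [hunbiased, norm_one, one_pow] using
    cramer_rao_bvn_modified_general hρ H (Θ - (θ : ℂ) • 1)
end
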